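/- Let k = 2k₁ ≥ 4 be even. For every ℓ ≥ 2, the conformal algebra R†_{k×k,ℓ} is generated by its subspace of minimal weight ℓ, namely by X^{(ℓ)} = R†_{k×k,ℓ} ∩ span{u(m₁,m₂) : u ∈ A, m₁+m₂+1 = ℓ}: R†_{k×k,ℓ} equals the span of all iterated products u¹⁽ⁿ¹⁾(u²⁽ⁿ²⁾(⋯(uˢ⁽ⁿˢ⁾v)⋯)) with s ∈ ℕ, u¹,…,uˢ, v ∈ X^{(ℓ)}, and n₁,…,nₛ ∈ ℕ. -/

import Mathlib

/-- The carrier of `R_{k×k} = M_k(F) ⊗ F[t₁,t₂]`: the element `u(m,n) = u ⊗ t₁^m t₂^n`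
is encoded as `Finsupp.single (m, n) u`. -/
abbrev MatCarrier (F : Type*) [Field F] (k : ℕ) :=
  (ℕ × ℕ) →₀ Matrix (Fin k) (Fin k) F

/-- The operator `∂` on `R_{k×k}`:
`∂(u(m,n)) = (m+1)·u(m+1,n) + (n+1)·u(m,n+1)`. -/
noncomputable def mD (F : Type*) [Field F] (k : ℕ) :
    MatCarrier F k → MatCarrier F k :=
  fun f => f.sum fun p u =>
    (((p.1 + 1 : ℕ) : F)) • Finsupp.single (p.1 + 1, p.2) u +
    (((p.2 + 1 : ℕ) : F)) • Finsupp.single (p.1, p.2 + 1) u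

/-- The `s`-th product on `R_{k×k}`: the coefficient of `z^{-s-1}` in
`Y⁺(u(m₁,m₂),z)(v(n₁,n₂)) =
  binom(-n₁-1,m₂)·Σ_p binom(p,m₁)·(uv)(p,n₂)·z^{p-m₁-m₂-n₁-1}
  - binom(-n₂-1,m₁)·Σ_q binom(q,m₂)·(vu)(n₁,q)·z^{q-m₁-m₂-n₂-1}`,
extended bilinearly, where `binom(-a-1,b) = (-1)^b·binom(a+b,b)`. -/
noncomputable def mProd (F : Type*) [Field F] (k : ℕ) (s : ℕ)
    (f g : MatCarrier F k) : MatCarrier F k :=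
  f.sum fun p u => g.sum fun q v =>
    (if s ≤ p.1 + p.2 + q.1 then
      ((-1 : F) ^ p.2 * ((q.1 + p.2).choose p.2 : F) *
        ((p.1 + p.2 + q.1 - s).choose p.1 : F)) •
        Finsupp.single (p.1 + p.2 + q.1 - s, q.2) (u * v)
     else 0) -
    (if s ≤ p.1 + p.2 + q.2 then
      ((-1 : F) ^ p.1 * ((q.2 + p.1).choose p.1 : F) *
        ((p.1 + p.2 + q.2 - s).choose p.2 : F)) •
        Finsupp.single (q.1, p.1 + p.2 + q.2 - s) (v * u)
     else 0)

/-- The weight space `R_{k×k}^{(n)} = span{u(m₁,m₂) : m₁ + m₂ + 1 = n}`. -/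
noncomputable def mWeight (F : Type*) [Field F] (k : ℕ) (n : ℕ) :
    Submodule F (MatCarrier F k) :=
  Submodule.span F {x | ∃ (u : Matrix (Fin k) (Fin k) F) (m₁ m₂ : ℕ),
    m₁ + m₂ + 1 = n ∧ x = Finsupp.single (m₁, m₂) u}

/-- For even `k = k₁ + k₁`, the involutive anti-automorphism
`u† = [[0,-I],[I,0]] · uᵀ · [[0,I],[-I,0]]` of `M_k(F)`. -/
noncomputable def mDagger (F : Type*) [Field F] (k₁ : ℕ)
    (u : Matrix (Fin (k₁ + k₁)) (Fin (k₁ + k₁)) F) :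
    Matrix (Fin (k₁ + k₁)) (Fin (k₁ + k₁)) F :=
  (Matrix.reindex finSumFinEquiv finSumFinEquiv
      (Matrix.fromBlocks (0 : Matrix (Fin k₁) (Fin k₁) F) (-1) 1 0)) *
    u.transpose *
  (Matrix.reindex finSumFinEquiv finSumFinEquiv
      (Matrix.fromBlocks (0 : Matrix (Fin k₁) (Fin k₁) F) 1 (-1) 0))

/-- The subspace `R†_{k×k,ℓ} = span{binom(n+ℓ-1,ℓ-1)·u(m,n+ℓ-1)
- (-1)^{ℓ-1}·binom(m+ℓ-1,ℓ-1)·u†(n,m+ℓ-1) : u ∈ A, m, n ∈ ℕ}` (`ℓ ≥ 1`, `k = k₁+k₁`). -/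
noncomputable def RkklDagger (F : Type*) [Field F] (k₁ ℓ : ℕ) :
    Submodule F (MatCarrier F (k₁ + k₁)) :=
  Submodule.span F {x | ∃ (u : Matrix (Fin (k₁ + k₁)) (Fin (k₁ + k₁)) F) (m n : ℕ),
    x = (((n + ℓ - 1).choose (ℓ - 1) : F)) • Finsupp.single (m, n + ℓ - 1) u -
        ((-1 : F) ^ (ℓ - 1) * (((m + ℓ - 1).choose (ℓ - 1) : F))) •
          Finsupp.single (n, m + ℓ - 1) (mDagger F k₁ u)}

/-- Iterated products `u¹⁽ⁿ¹⁾(u²⁽ⁿ²⁾(⋯(uˢ⁽ⁿˢ⁾v)⋯))` with all `uⁱ, v` in `S`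
(the case `s = 0` being `v` itself). -/
inductive IterProd {R : Type*} (P : ℕ → R → R → R) (S : Set R) : R → Prop
  | base : ∀ v ∈ S, IterProd P S v
  | step : ∀ u ∈ S, ∀ (n : ℕ) (w : R), IterProd P S w → IterProd P S (P n u w)

/-!
Put `η = (-1) ^ (ℓ - 1)`. The vectors of minimal weight are the `u(0,ℓ-1)` with `u† = -η u`. On the
element of `R†_{k×k,ℓ}` attached to `(v, m, n)`, the product `⁽ℓ⁻¹⁾` by such a vector keeps
`(m, n)` and replaces `v` by a combination of `uv` and `vu`, whose coefficients have different
squares when `m > n = 0`; the product `⁽ℓ⁻²⁾` raises `m` or `n` by one. So the set `K` of matrices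
`v` for which the element attached to `(v, m, 0)` is generated is stable under these twisted
multiplications. For `u² = 1` such stability forces `uK ⊆ K` and `Ku ⊆ K`, which gives a nontrivial
idempotent acting on both sides of `K`; by the Peirce decomposition all of `M_k(F)` then does, so
`K` is an ideal, and the products `⁽ℓ⁻²⁾` from degree `m - 1` show that it is nonzero.
-/

open scoped Matrix

section Involution

variable {F A : Type*} [Field F] [Ring A] [Algebra F A]

/-- The linear map `σ` is an involution of the algebra `A`, that is, an anti-automorphism of
order dividing two. A predicate on linear maps is used rather than `StarRing`, so that several
involutions can live on the same algebra. -/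
structure IsAlgInvolution (σ : A →ₗ[F] A) : Prop where
  map_mul : ∀ x y, σ (x * y) = σ y * σ x
  involutive : Function.Involutive σ

namespace IsAlgInvolution

variable {σ : A →ₗ[F] A} (hσ : IsAlgInvolution σ)
include hσ

lemma map_one : σ 1 = 1 := by
  simpa [hσ.involutive 1] using (hσ.map_mul 1 (σ 1)).symm

lemma add_smul_mem_eigenspace {ε : F} (hε : ε * ε = 1) (x : A) :
    x + ε • σ x ∈ Module.End.eigenspace σ ε := by
  rw [Module.End.mem_eigenspace_iff, map_add, map_smul, hσ.involutive, smul_add, smul_smul, hε,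
    one_smul, add_comm]

lemma mul_mem_eigenspace {ε : F} {g a : A} (hg : g ∈ Module.End.eigenspace σ ε) (ha : σ a = a)
    (hga : Commute g a) : g * a ∈ Module.End.eigenspace σ ε := by
  rw [Module.End.mem_eigenspace_iff] at hg ⊢
  rw [hσ.map_mul, ha, hg, mul_smul_comm, hga.eq]

end IsAlgInvolution

/-- The two-sided idealizer of a subspace `K`: the largest subalgebra for which `K` is a
bimodule under multiplication. -/
def idealizer (K : Submodule F A) : Subalgebra F A where
  carrier := {a | ∀ v ∈ K, a * v ∈ K ∧ v * a ∈ K}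
  mul_mem' {a b} ha hb v hv :=
    ⟨mul_assoc a b v ▸ (ha _ (hb v hv).1).1, mul_assoc v a b ▸ (hb _ (ha v hv).2).2⟩
  add_mem' {a b} ha hb v hv :=
    ⟨add_mul a b v ▸ K.add_mem (ha v hv).1 (hb v hv).1,
      mul_add v a b ▸ K.add_mem (ha v hv).2 (hb v hv).2⟩
  algebraMap_mem' c v hv := by
    rw [← Algebra.commutes c v, ← Algebra.smul_def]
    exact ⟨K.smul_mem c hv, K.smul_mem c hv⟩

lemma mem_idealizer {K : Submodule F A} {a : A} :
    a ∈ idealizer K ↔ ∀ v ∈ K, a * v ∈ K ∧ v * a ∈ K := Iff.rfl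

section TwistedMultiplication

variable {K : Submodule F A} {α β : F} {u : A}
  (hu : ∀ v ∈ K, α • (u * v) + β • (v * u) ∈ K)
include hu

-- With `T v = α u v + β v u`, the operator `T ^ 2` is a combination of `1` and `v ↦ u v u`.
lemma mul_mul_mem_of_mul_self_eq_one (h2 : (2 : F) ≠ 0) (hα : α ≠ 0) (hβ : β ≠ 0)
    (huu : u * u = 1) {v : A} (hv : v ∈ K) : u * v * u ∈ K := by
  have hTT : α • (u * (α • (u * v) + β • (v * u))) + β • ((α • (u * v) + β • (v * u)) * u) =
      (2 * α * β) • (u * v * u) + (α ^ 2 + β ^ 2) • v := by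
    have huuv : u * (u * v) = v := by rw [← mul_assoc, huu, one_mul]
    have hvuu : v * u * u = v := by rw [mul_assoc, huu, mul_one]
    simp only [mul_add, add_mul, mul_smul_comm, smul_mul_assoc, huuv, hvuu, ← mul_assoc u v u]
    module
  have hmem := hTT ▸ hu _ (hu v hv)
  exact (K.smul_mem_iff (by simp [h2, hα, hβ])).1
    ((K.add_mem_iff_left (K.smul_mem _ hv)).1 hmem)

lemma mem_idealizer_of_mul_self_eq_one (h2 : (2 : F) ≠ 0) (hα : α ≠ 0) (hβ : β ≠ 0)
    (hαβ : α ^ 2 ≠ β ^ 2) (huu : u * u = 1) : u ∈ idealizer K := by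
  intro v hv
  have hT : α • (u * v) + β • (v * u) ∈ K := hu v hv
  have hT' : α • (v * u) + β • (u * v) ∈ K := by
    have hmem := hu _ (mul_mul_mem_of_mul_self_eq_one hu h2 hα hβ huu hv)
    rwa [mul_assoc _ u u, huu, mul_one, ← mul_assoc, ← mul_assoc, huu, one_mul] at hmem
  have solve_system (x y : A) (hxy : α • x + β • y ∈ K) (hyx : α • y + β • x ∈ K) : x ∈ K := by
    have hcomb : α • (α • x + β • y) - β • (α • y + β • x) = (α ^ 2 - β ^ 2) • x := by module
    exact (K.smul_mem_iff (sub_ne_zero.2 hαβ)).1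
      (hcomb ▸ K.sub_mem (K.smul_mem α hxy) (K.smul_mem β hyx))
  exact ⟨solve_system _ _ hT hT', solve_system _ _ hT' hT⟩

lemma mul_mul_mem_idealizer_of_mul_eq_zero (hα : α ≠ 0) (hβ : β ≠ 0) {p q : A}
    (hp : p ∈ idealizer K) (hq : q ∈ idealizer K) (hpq : p * q = 0) :
    p * u * q ∈ idealizer K := by
  intro v hv
  have hleft := (hp _ (hu _ (hq v hv).1)).1
  have hright := (hq _ (hu _ (hp v hv).2)).2
  simp only [mul_add, add_mul, mul_smul_comm, smul_mul_assoc] at hleft hright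
  rw [← mul_assoc p (q * v), ← mul_assoc p q, hpq, zero_mul, zero_mul, smul_zero,
    add_zero, K.smul_mem_iff hα] at hleft
  rw [mul_assoc u, mul_assoc v p q, hpq, mul_zero, mul_zero, smul_zero, zero_add,
    K.smul_mem_iff hβ] at hright
  simp only [mul_assoc] at hleft hright ⊢
  exact ⟨hleft, hright⟩

end TwistedMultiplication

lemma eq_top_of_forall_mul_mul_mem [IsSimpleRing A] {e : A} (he : e ≠ 0)
    (K : Submodule F A) (hK : ∀ a b, a * e * b ∈ K) : K = ⊤ := by
  have hspan : TwoSidedIdeal.span {e} = ⊤ :=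
    (eq_bot_or_eq_top _).resolve_left fun hbot ↦ he <| by
      simpa [hbot] using TwoSidedIdeal.subset_span (Set.mem_singleton e)
  refine Submodule.eq_top_iff'.2 fun x ↦ ?_
  have hx : x ∈ TwoSidedIdeal.span {e} := hspan ▸ trivial
  rw [TwoSidedIdeal.mem_span_iff_mem_addSubgroup_closure] at hx
  refine (AddSubgroup.closure_le K.toAddSubgroup).2 ?_ hx
  rintro _ ⟨_, ⟨a, -, _, rfl, rfl⟩, b, -, rfl⟩
  exact hK a b

lemma corner_mem_of_peirce_mem [IsSimpleRing A] {S : Subalgebra F A} {p q : A}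
    (hq : IsIdempotentElem q) (hq0 : q ≠ 0) (hpq : ∀ x, p * x * q ∈ S) (hqp : ∀ x, q * x * p ∈ S)
    (x : A) : p * x * p ∈ S := by
  let T := (Subalgebra.toSubmodule S).comap (LinearMap.mulLeft F p ∘ₗ LinearMap.mulRight F p)
  have hT : T = ⊤ := eq_top_of_forall_mul_mul_mem hq0 T fun a b ↦ by
    have hmul := mul_mem (hpq a) (hqp b)
    simpa [T, mul_assoc, hq.eq, ← mul_assoc q q] using hmul
  have hx : x ∈ T := hT ▸ trivial
  simpa [T, mul_assoc] using hx

section HermitianMultiplication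

variable {σ : A →ₗ[F] A} (hσ : IsAlgInvolution σ) {ε : F}
  {g e : A} (hg : g ∈ Module.End.eigenspace σ ε) (hgg : g * g = 1)
  (hσe : σ e = e) (he : IsIdempotentElem e) (hge : Commute g e)
  {K : Submodule F A} {α β : F}
  (hK : ∀ u ∈ Module.End.eigenspace σ ε, ∀ v ∈ K, α • (u * v) + β • (v * u) ∈ K)

include hσ hg hgg hσe he hge hK in
lemma idempotent_mem_idealizer (h2 : (2 : F) ≠ 0) (hα : α ≠ 0) (hβ : β ≠ 0)
    (hαβ : α ^ 2 ≠ β ^ 2) : e ∈ idealizer K := by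
  set r := 1 - (2 : F) • e with hr
  have hrr : r * r = 1 := by
    simp only [hr, sub_mul, mul_sub, one_mul, mul_one, smul_mul_assoc, mul_smul_comm, he.eq]
    module
  have hgr : Commute g r := (Commute.one_right g).sub_right (hge.smul_right 2)
  have hσr : σ r = r := by rw [hr, map_sub, map_smul, hσ.map_one, hσe]
  have mem_of_sq_eq_one {u : A} (hu : u ∈ Module.End.eigenspace σ ε) (huu : u * u = 1) :
      u ∈ idealizer K :=
    mem_idealizer_of_mul_self_eq_one (hK u hu) h2 hα hβ hαβ huu
  have hg_mem : g ∈ idealizer K := mem_of_sq_eq_one hg hgg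
  have hgr_mem : g * r ∈ idealizer K :=
    mem_of_sq_eq_one (hσ.mul_mem_eigenspace hg hσr hgr) <| by
      rw [hgr.symm.mul_mul_mul_comm, hgg, hrr, one_mul]
  have he_eq : e = (2 : F)⁻¹ • (1 - g * (g * r)) := by
    rw [← mul_assoc, hgg, one_mul, hr, sub_sub_cancel, smul_smul, inv_mul_cancel₀ h2, one_smul]
  rw [he_eq]
  exact Subalgebra.smul_mem _ (sub_mem (one_mem _) (mul_mem hg_mem hgr_mem)) _

include hσ hK in
lemma peirce_mem_idealizer (hε : ε * ε = 1) (hα : α ≠ 0) (hβ : β ≠ 0) {p q : A}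
    (hp : IsIdempotentElem p) (hq : IsIdempotentElem q) (hσq : σ q = q)
    (hpq : p * q = 0) (hpK : p ∈ idealizer K) (hqK : q ∈ idealizer K) (x : A) :
    p * x * q ∈ idealizer K := by
  have hmem := mul_mul_mem_idealizer_of_mul_eq_zero
    (hK _ (hσ.add_smul_mem_eigenspace hε (p * x * q))) hα hβ hpK hqK hpq
  have hσx : p * σ (p * x * q) = 0 := by
    rw [hσ.map_mul, hσq, ← mul_assoc, hpq, zero_mul]
  have hpx : p * (p * x * q) * q = p * x * q := by
    simp only [← mul_assoc, hp.eq]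
    rw [mul_assoc, hq.eq]
  rwa [mul_add, mul_smul_comm, hσx, smul_zero, add_zero, hpx] at hmem

include hσ hg hgg hσe he hge hK in
lemma idealizer_eq_top [IsSimpleRing A] (h2 : (2 : F) ≠ 0) (hε : ε * ε = 1) (he0 : e ≠ 0)
    (he1 : e ≠ 1) (hα : α ≠ 0) (hβ : β ≠ 0) (hαβ : α ^ 2 ≠ β ^ 2) : idealizer K = ⊤ := by
  set f := 1 - e with hf
  have hfi : IsIdempotentElem f := he.one_sub
  have hσf : σ f = f := by rw [hf, map_sub, hσ.map_one, hσe]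
  have heK : e ∈ idealizer K := idempotent_mem_idealizer hσ hg hgg hσe he hge hK h2 hα hβ hαβ
  have hfK : f ∈ idealizer K := sub_mem (one_mem _) heK
  have hef : e * f = 0 := he.mul_one_sub_self
  have hfe : f * e = 0 := he.one_sub_mul_self
  have hf0 : f ≠ 0 := sub_ne_zero.2 he1.symm
  have off_diag_ef := peirce_mem_idealizer hσ hK hε hα hβ he hfi hσf hef heK hfK
  have off_diag_fe := peirce_mem_idealizer hσ hK hε hα hβ hfi he hσe hfe hfK heK
  refine Algebra.eq_top_iff.2 fun x ↦ ?_
  have hx : x = e * x * e + e * x * f + (f * x * e + f * x * f) := by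
    simp only [hf]; noncomm_ring
  rw [hx]
  have hee := corner_mem_of_peirce_mem hfi hf0 off_diag_ef off_diag_fe x
  have hff := corner_mem_of_peirce_mem he he0 off_diag_fe off_diag_ef x
  exact add_mem (add_mem hee (off_diag_ef x)) (add_mem (off_diag_fe x) hff)

include hσ hg hgg hσe he hge hK in
theorem eq_top_of_twisted_mul_mem [IsSimpleRing A] (h2 : (2 : F) ≠ 0) (hε : ε * ε = 1)
    (he0 : e ≠ 0) (he1 : e ≠ 1) (hα : α ≠ 0) (hβ : β ≠ 0) (hαβ : α ^ 2 ≠ β ^ 2)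
    (hseed : ∀ u ∈ Module.End.eigenspace σ ε, ∀ v, v * u = 0 → u * v ∈ K) : K = ⊤ := by
  have htop := idealizer_eq_top hσ hg hgg hσe he hge hK h2 hε he0 he1 hα hβ hαβ
  have hideal (a : A) : ∀ v ∈ K, a * v ∈ K ∧ v * a ∈ K := mem_idealizer.1 (htop ▸ trivial)
  have hcorner (y : A) : e * y * (1 - e) ∈ K := by
    have hmem := hseed _ (hσ.mul_mem_eigenspace hg hσe hge) (y * (1 - e)) <| by
      rw [hge.eq, ← mul_assoc, mul_assoc y, he.one_sub_mul_self, mul_zero, zero_mul]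
    have hg_mul := (hideal g _ hmem).1
    rwa [mul_assoc g e, ← mul_assoc g g, hgg, one_mul, ← mul_assoc] at hg_mul
  have hf : (1 - e) ∈ K := by
    let T := K.comap (LinearMap.mulRight F (1 - e))
    have hT : T = ⊤ := eq_top_of_forall_mul_mul_mem he0 T fun a b ↦ by
      simpa [T, mul_assoc] using (hideal a _ (hcorner b)).1
    have h1 : (1 : A) ∈ T := hT ▸ trivial
    simpa [T] using h1
  exact eq_top_of_forall_mul_mul_mem (sub_ne_zero.2 he1.symm) K fun a b ↦
    (hideal b _ (hideal a _ hf).1).2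

end HermitianMultiplication

end Involution

section Dagger

variable (F : Type*) [Field F] (k₁ : ℕ)

/-- `M_{k₁}(F)`-valued `2 × 2` matrices as elements of `M_{2k₁}(F)`, in the block convention
of `mDagger`. -/
noncomputable def blockEquiv :
    Matrix (Fin k₁ ⊕ Fin k₁) (Fin k₁ ⊕ Fin k₁) F ≃ₐ[F]
      Matrix (Fin (k₁ + k₁)) (Fin (k₁ + k₁)) F :=
  Matrix.reindexAlgEquiv F F finSumFinEquiv

variable {F k₁}

lemma mDagger_blockEquiv_fromBlocks (a b c d : Matrix (Fin k₁) (Fin k₁) F) :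
    mDagger F k₁ (blockEquiv F k₁ (.fromBlocks a b c d)) =
      blockEquiv F k₁ (.fromBlocks dᵀ (-bᵀ) (-cᵀ) aᵀ) := by
  simp [mDagger, blockEquiv, Matrix.fromBlocks_transpose, Matrix.fromBlocks_multiply]

lemma exists_eq_blockEquiv_fromBlocks (u : Matrix (Fin (k₁ + k₁)) (Fin (k₁ + k₁)) F) :
    ∃ a b c d, u = blockEquiv F k₁ (.fromBlocks a b c d) := by
  obtain ⟨w, rfl⟩ := (blockEquiv F k₁).surjective u
  exact ⟨_, _, _, _, by rw [Matrix.fromBlocks_toBlocks]⟩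

variable (F k₁) in
/-- The map `u ↦ u†` as a linear map. -/
noncomputable def daggerLinearMap :
    Matrix (Fin (k₁ + k₁)) (Fin (k₁ + k₁)) F →ₗ[F] Matrix (Fin (k₁ + k₁)) (Fin (k₁ + k₁)) F where
  toFun := mDagger F k₁
  map_add' u v := by simp only [mDagger, Matrix.transpose_add, mul_add, add_mul]
  map_smul' c u := by
    simp only [mDagger, Matrix.transpose_smul, mul_smul_comm, smul_mul_assoc, RingHom.id_apply]

lemma daggerLinearMap_blockEquiv_fromBlocks (a b c d : Matrix (Fin k₁) (Fin k₁) F) :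
    daggerLinearMap F k₁ (blockEquiv F k₁ (.fromBlocks a b c d)) =
      blockEquiv F k₁ (.fromBlocks dᵀ (-bᵀ) (-cᵀ) aᵀ) :=
  mDagger_blockEquiv_fromBlocks a b c d

lemma isAlgInvolution_daggerLinearMap : IsAlgInvolution (daggerLinearMap F k₁) where
  map_mul x y := by
    obtain ⟨a, b, c, d, rfl⟩ := exists_eq_blockEquiv_fromBlocks x
    obtain ⟨a', b', c', d', rfl⟩ := exists_eq_blockEquiv_fromBlocks y
    simp [← map_mul, Matrix.fromBlocks_multiply, daggerLinearMap_blockEquiv_fromBlocks,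
      Matrix.transpose_mul, add_comm]
  involutive x := by
    obtain ⟨a, b, c, d, rfl⟩ := exists_eq_blockEquiv_fromBlocks x
    simp [daggerLinearMap_blockEquiv_fromBlocks]

lemma exists_dagger_eigenvector_and_idempotent (hk₁ : 2 ≤ k₁) {ε : F} (hε : ε * ε = 1) :
    ∃ g e : Matrix (Fin (k₁ + k₁)) (Fin (k₁ + k₁)) F,
      g ∈ Module.End.eigenspace (daggerLinearMap F k₁) ε ∧ g * g = 1 ∧
      daggerLinearMap F k₁ e = e ∧ IsIdempotentElem e ∧ Commute g e ∧ e ≠ 0 ∧ e ≠ 1 := by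
  let i : Fin k₁ := ⟨0, by omega⟩
  let j : Fin k₁ := ⟨1, by omega⟩
  let E : Matrix (Fin k₁) (Fin k₁) F := Matrix.single i i 1
  refine ⟨blockEquiv F k₁ (.fromBlocks 1 0 0 (ε • 1)), blockEquiv F k₁ (.fromBlocks E 0 0 E),
    ?_, ?_, ?_, ?_, ?_, ?_, ?_⟩
  · simp [daggerLinearMap_blockEquiv_fromBlocks, ← map_smul,
      Matrix.fromBlocks_smul, smul_smul, hε]
  · simp [← map_mul, Matrix.fromBlocks_multiply, smul_smul, hε]
  · simp [daggerLinearMap_blockEquiv_fromBlocks, E]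
  · simp [IsIdempotentElem, ← map_mul, Matrix.fromBlocks_multiply, E]
  · simp [commute_iff_eq, ← map_mul, Matrix.fromBlocks_multiply]
  · rw [map_ne_zero_iff _ (blockEquiv F k₁).injective]
    intro h
    have := congrFun₂ h (.inl i) (.inl i)
    simp [E] at this
  · rw [map_ne_one_iff _ (blockEquiv F k₁).injective]
    intro h
    have := congrFun₂ h (.inl j) (.inl j)
    simp [E, i, j] at this

end Dagger

section Conformal

lemma neg_one_pow_mul_self {R : Type*} [Monoid R] [HasDistribNeg R] (n : ℕ) :
    (-1 : R) ^ n * (-1) ^ n = 1 := by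
  rw [← pow_add, Even.neg_one_pow ⟨n, rfl⟩]

lemma cast_choose_ne_zero {R : Type*} [AddMonoidWithOne R] [CharZero R] (n N : ℕ) :
    ((n + N).choose N : R) ≠ 0 :=
  Nat.cast_ne_zero.2 (Nat.choose_pos (Nat.le_add_left N n)).ne'

lemma sq_cast_choose_ne_one {R : Type*} [Semiring R] [CharZero R] {N : ℕ} (hN : 0 < N) (d : ℕ) :
    ((d + 1 + N).choose N : R) ^ 2 ≠ 1 := by
  have hchoose : (d + 1 + N).choose N ≠ 1 := by
    rw [Ne, Nat.choose_eq_one_iff]; omega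
  exact_mod_cast mt (Nat.pow_eq_one.1 · |>.resolve_right two_ne_zero) hchoose

variable {F : Type*} [Field F] {k : ℕ}

/-- The operator `w ↦ f⁽ˢ⁾w` of the conformal algebra `R_{k×k}` as a linear map. -/
noncomputable def mProdLeft (s : ℕ) (f : MatCarrier F k) : MatCarrier F k →ₗ[F] MatCarrier F k where
  toFun := mProd F k s f
  map_add' g h := by
    unfold mProd
    rw [← Finsupp.sum_add]
    refine Finsupp.sum_congr fun p _ ↦ Finsupp.sum_add_index' (fun q ↦ by simp) fun q u v ↦ ?_
    simp only [mul_add, add_mul, Finsupp.single_add, smul_add]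
    split_ifs <;> abel
  map_smul' c g := by
    unfold mProd
    rw [Finsupp.smul_sum]
    refine Finsupp.sum_congr fun p _ ↦ ?_
    rw [Finsupp.sum_smul_index' fun q ↦ by simp, Finsupp.smul_sum]
    refine Finsupp.sum_congr fun q _ ↦ ?_
    simp only [mul_smul_comm, smul_mul_assoc, ← Finsupp.smul_single, smul_sub, RingHom.id_apply]
    split_ifs <;> simp [smul_comm c]

lemma mProd_single_single (s N m n : ℕ) (u v : Matrix (Fin k) (Fin k) F) :
    mProd F k s (.single (0, N) u) (.single (m, n + N) v) =
      (if s ≤ N + m then ((-1 : F) ^ N * ((m + N).choose N : F)) •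
        Finsupp.single (N + m - s, n + N) (u * v) else 0) -
      (if s ≤ N + n then ((N + n - s + N).choose N : F) •
        Finsupp.single (m, N + n - s + N) (v * u) else 0) := by
  have hif : (if s ≤ N + (n + N) then ((N + (n + N) - s).choose N : F) •
        Finsupp.single (m, N + (n + N) - s) (v * u) else 0) =
      if s ≤ N + n then ((N + n - s + N).choose N : F) •
        Finsupp.single (m, N + n - s + N) (v * u) else 0 := by
    by_cases h : s ≤ N + n
    · rw [if_pos h, if_pos (by omega), show N + (n + N) - s = N + n - s + N by omega]
    · rw [if_neg h, ite_eq_right_iff]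
      intro h'
      rw [Nat.choose_eq_zero_of_lt (by omega), Nat.cast_zero, zero_smul]
  simpa [mProd, -Finsupp.single_mul] using hif

lemma mProd_mem_span_iterProd {S : Set (MatCarrier F k)} {u w : MatCarrier F k} (hu : u ∈ S)
    (s : ℕ) (hw : w ∈ Submodule.span F {x | IterProd (mProd F k) S x}) :
    mProd F k s u w ∈ Submodule.span F {x | IterProd (mProd F k) S x} := by
  suffices h : _ ≤ (Submodule.span F _).comap (mProdLeft s u) from h hw
  exact Submodule.span_le.2 fun x hx ↦ Submodule.subset_span (IterProd.step u hu s x hx)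

lemma single_mem_mWeight (m n : ℕ) (u : Matrix (Fin k) (Fin k) F) :
    .single (m, n) u ∈ mWeight F k (m + n + 1) :=
  Submodule.subset_span ⟨u, m, n, rfl, rfl⟩

lemma mWeight_le_supported (n : ℕ) :
    mWeight F k n ≤ Finsupp.supported _ F {p : ℕ × ℕ | p.1 + p.2 + 1 = n} := by
  refine Submodule.span_le.2 ?_
  rintro _ ⟨u, m₁, m₂, h, rfl⟩
  exact Finsupp.single_mem_supported F u h

variable (σ : Matrix (Fin k) (Fin k) F →ₗ[F] Matrix (Fin k) (Fin k) F) (N : ℕ)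

/-- The spanning elements of `R^σ_{k×k,N+1}`, linear in the matrix argument; for `σ = †` these
are the ones in the definition of `RkklDagger`, with `N = ℓ - 1` to avoid subtraction. -/
noncomputable def twistedGenerator (m n : ℕ) : Matrix (Fin k) (Fin k) F →ₗ[F] MatCarrier F k :=
  ((n + N).choose N : F) • Finsupp.lsingle (m, n + N) -
    ((-1 : F) ^ N * ((m + N).choose N : F)) • Finsupp.lsingle (n, m + N) ∘ₗ σ

/-- The subspace `R^σ_{k×k,N+1}` of `R_{k×k}` attached to an involution `σ` of `M_k(F)`. -/
noncomputable def twistedSubspace : Submodule F (MatCarrier F k) :=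
  Submodule.span F {x | ∃ u m n, x = twistedGenerator σ N m n u}

/-- The vectors of minimal weight in `R^σ_{k×k,N+1}`. -/
def minimalWeightVectors : Set (MatCarrier F k) :=
  {y | y ∈ twistedSubspace σ N ∧ y ∈ mWeight F k (N + 1)}

lemma RkklDagger_eq_twistedSubspace (k₁ : ℕ) :
    RkklDagger F k₁ (N + 1) = twistedSubspace (daggerLinearMap F k₁) N := rfl

variable {σ N}

lemma twistedGenerator_apply (m n : ℕ) (u : Matrix (Fin k) (Fin k) F) :
    twistedGenerator σ N m n u = ((n + N).choose N : F) • Finsupp.single (m, n + N) u -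
      ((-1 : F) ^ N * ((m + N).choose N : F)) • Finsupp.single (n, m + N) (σ u) := rfl

lemma twistedGenerator_mem (m n : ℕ) (u : Matrix (Fin k) (Fin k) F) :
    twistedGenerator σ N m n u ∈ twistedSubspace σ N :=
  Submodule.subset_span ⟨u, m, n, rfl⟩

lemma mProd_twistedGenerator (hσ : IsAlgInvolution σ) {u : Matrix (Fin k) (Fin k) F}
    (hu : u ∈ Module.End.eigenspace σ ((-1) ^ (N + 1))) (s m n : ℕ) (v : Matrix (Fin k) (Fin k) F) :
    mProd F k s (.single (0, N) u) (twistedGenerator σ N m n v) =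
      (if s ≤ N + m then ((-1 : F) ^ N * ((m + N).choose N : F)) •
        twistedGenerator σ N (N + m - s) n (u * v) else 0) -
      (if s ≤ N + n then ((n + N).choose N : F) •
        twistedGenerator σ N m (N + n - s) (v * u) else 0) := by
  have hsq : (-1 : F) ^ N * (-1) ^ N = 1 := neg_one_pow_mul_self N
  rw [Module.End.mem_eigenspace_iff, pow_succ] at hu
  rw [twistedGenerator_apply]
  change mProdLeft s _ _ = _
  rw [map_sub, map_smul, map_smul]
  change _ • mProd F k s _ _ - _ • mProd F k s _ _ = _
  simp only [mProd_single_single, twistedGenerator_apply, hσ.map_mul, hu, mul_smul_comm,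
    smul_mul_assoc, ← Finsupp.smul_single]
  generalize (-1 : F) ^ N = η at *
  split_ifs
  all_goals
    match_scalars <;> (first | ring1 |
      linear_combination (-η * ((m + N).choose N : F) * ((N + m - s + N).choose N : F)) * hsq)

lemma twistedSubspace_le_supported :
    twistedSubspace σ N ≤ Finsupp.supported _ F {p : ℕ × ℕ | N ≤ p.2} := by
  refine Submodule.span_le.2 ?_
  rintro _ ⟨u, m, n, rfl⟩
  exact sub_mem (Submodule.smul_mem _ _ (Finsupp.single_mem_supported F _ (Nat.le_add_left ..)))
    (Submodule.smul_mem _ _ (Finsupp.single_mem_supported F _ (Nat.le_add_left ..)))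

lemma apply_mem_eigenspace_of_mem_twistedSubspace (hσ : IsAlgInvolution σ) {y : MatCarrier F k}
    (hy : y ∈ twistedSubspace σ N) :
    y (0, N) ∈ Module.End.eigenspace σ ((-1) ^ (N + 1)) := by
  suffices h : twistedSubspace σ N ≤
      (Module.End.eigenspace σ ((-1) ^ (N + 1))).comap (Finsupp.lapply (0, N)) from h hy
  refine Submodule.span_le.2 ?_
  rintro _ ⟨u, m, n, rfl⟩
  by_cases hmn : m = 0 ∧ n = 0
  · obtain ⟨rfl, rfl⟩ := hmn
    simpa [twistedGenerator_apply, pow_succ, sub_eq_add_neg]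
      using hσ.add_smul_mem_eigenspace (neg_one_pow_mul_self (N + 1)) u
  · have hm : ((0, N) : ℕ × ℕ) ≠ (m, n + N) := by simp; omega
    have hn : ((0, N) : ℕ × ℕ) ≠ (n, m + N) := by simp; omega
    simp [twistedGenerator_apply, Finsupp.single_eq_of_ne, hm, hn]

lemma mem_minimalWeightVectors (hσ : IsAlgInvolution σ) (h2 : (2 : F) ≠ 0) {y : MatCarrier F k} :
    y ∈ minimalWeightVectors σ N ↔
      ∃ u ∈ Module.End.eigenspace σ ((-1) ^ (N + 1)), y = .single (0, N) u := by
  constructor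
  · rintro ⟨hyσ, hyw⟩
    refine ⟨y (0, N), apply_mem_eigenspace_of_mem_twistedSubspace hσ hyσ, ?_⟩
    refine Finsupp.support_subset_singleton.1 fun p hp ↦ Finset.mem_singleton.2 ?_
    have hpw : p.1 + p.2 + 1 = N + 1 := mWeight_le_supported _ hyw hp
    have hpN : N ≤ p.2 := twistedSubspace_le_supported hyσ hp
    exact Prod.ext (by omega) (by omega)
  · rintro ⟨u, hu, rfl⟩
    refine ⟨?_, by simpa using single_mem_mWeight 0 N u⟩
    have hgen : twistedGenerator σ N 0 0 u = (2 : F) • .single (0, N) u := by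
      have hη : (-1 : F) ^ N * (-1) ^ (N + 1) = -1 := by
        rw [pow_succ, ← mul_assoc, neg_one_pow_mul_self, one_mul]
      rw [twistedGenerator_apply, Module.End.mem_eigenspace_iff.1 hu, ← Finsupp.smul_single,
        smul_smul]
      simp [hη, two_smul]
    exact (Submodule.smul_mem_iff _ h2).1 (hgen ▸ twistedGenerator_mem 0 0 u)

lemma twistedGenerator_zero_zero_mem_minimalWeightVectors (u : Matrix (Fin k) (Fin k) F) :
    twistedGenerator σ N 0 0 u ∈ minimalWeightVectors σ N := by
  refine ⟨twistedGenerator_mem 0 0 u, ?_⟩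
  have hmem (v : Matrix (Fin k) (Fin k) F) : .single (0, N) v ∈ mWeight F k (N + 1) := by
    simpa using single_mem_mWeight 0 N v
  simpa [twistedGenerator_apply] using
    sub_mem (hmem u) (Submodule.smul_mem _ ((-1 : F) ^ N) (hmem (σ u)))

lemma mProd_mem_twistedSubspace (hσ : IsAlgInvolution σ) {u : Matrix (Fin k) (Fin k) F}
    (hu : u ∈ Module.End.eigenspace σ ((-1) ^ (N + 1))) (s : ℕ) {w : MatCarrier F k}
    (hw : w ∈ twistedSubspace σ N) : mProd F k s (.single (0, N) u) w ∈ twistedSubspace σ N := by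
  suffices h : twistedSubspace σ N ≤ (twistedSubspace σ N).comap (mProdLeft s (.single (0, N) u))
    from h hw
  refine Submodule.span_le.2 ?_
  rintro _ ⟨v, m, n, rfl⟩
  change mProd F k s _ _ ∈ twistedSubspace σ N
  rw [mProd_twistedGenerator hσ hu]
  refine sub_mem ?_ ?_ <;> split_ifs <;>
    first | exact zero_mem _ | exact Submodule.smul_mem _ _ (twistedGenerator_mem _ _ _)

lemma span_iterProd_le_twistedSubspace (hσ : IsAlgInvolution σ) (h2 : (2 : F) ≠ 0) :
    Submodule.span F {x | IterProd (mProd F k) (minimalWeightVectors σ N) x} ≤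
      twistedSubspace σ N := by
  refine Submodule.span_le.2 fun x hx ↦ ?_
  induction hx with
  | base v hv => exact hv.1
  | step y hy s w _ hw =>
    obtain ⟨u, hu, rfl⟩ := (mem_minimalWeightVectors hσ h2).1 hy
    exact mProd_mem_twistedSubspace hσ hu s hw

section Generation

variable (hσ : IsAlgInvolution σ) {W : Submodule F (MatCarrier F k)}
  (hW : ∀ u ∈ Module.End.eigenspace σ ((-1) ^ (N + 1)), ∀ s, ∀ w ∈ W,
    mProd F k s (.single (0, N) u) w ∈ W)

section Degree

variable {u : Matrix (Fin k) (Fin k) F} (hu : u ∈ Module.End.eigenspace σ ((-1) ^ (N + 1)))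
  {m n : ℕ} {v : Matrix (Fin k) (Fin k) F} (hv : twistedGenerator σ N m n v ∈ W)

include hσ hW hu hv

lemma degree_preserving_mem :
    ((-1 : F) ^ N * ((m + N).choose N : F)) • twistedGenerator σ N m n (u * v) -
      ((n + N).choose N : F) • twistedGenerator σ N m n (v * u) ∈ W := by
  simpa [mProd_twistedGenerator hσ hu] using hW u hu N _ hv

lemma degree_raising_mem (hN : 0 < N) :
    ((-1 : F) ^ N * ((m + N).choose N : F)) • twistedGenerator σ N (m + 1) n (u * v) -
      ((n + N).choose N : F) • twistedGenerator σ N m (n + 1) (v * u) ∈ W := by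
  have hmem := hW u hu (N - 1) _ hv
  have hsub (i : ℕ) : N + i - (N - 1) = i + 1 := by omega
  rwa [mProd_twistedGenerator hσ hu, if_pos (by omega), if_pos (by omega), hsub, hsub] at hmem

end Degree

variable [CharZero F] (hN : 0 < N) {g : Matrix (Fin k) (Fin k) F}
  (hg : g ∈ Module.End.eigenspace σ ((-1) ^ (N + 1))) (hgg : g * g = 1)

include hσ hW hN hg hgg in
lemma twistedGenerator_succ_zero_mem {e : Matrix (Fin k) (Fin k) F} (hσe : σ e = e)
    (he : IsIdempotentElem e) (hge : Commute g e) (he0 : e ≠ 0) (he1 : e ≠ 1) {m : ℕ}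
    (hm : ∀ v, twistedGenerator σ N m 0 v ∈ W) (v : Matrix (Fin k) (Fin k) F) :
    twistedGenerator σ N (m + 1) 0 v ∈ W := by
  have : Nonempty (Fin k) := by
    by_contra hk
    rw [not_nonempty_iff] at hk
    exact he0 (Subsingleton.elim _ _)
  have hη : (-1 : F) ^ N ≠ 0 := pow_ne_zero _ (neg_ne_zero.2 one_ne_zero)
  let K := W.comap (twistedGenerator σ N (m + 1) 0)
  have hK : ∀ u ∈ Module.End.eigenspace σ ((-1) ^ (N + 1)), ∀ v ∈ K,
      ((-1 : F) ^ N * ((m + 1 + N).choose N : F)) • (u * v) + (-1 : F) • (v * u) ∈ K := by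
    intro u hu v hv
    simpa [K, sub_eq_add_neg] using degree_preserving_mem hσ hW hu hv
  have hseed : ∀ u ∈ Module.End.eigenspace σ ((-1) ^ (N + 1)), ∀ v, v * u = 0 → u * v ∈ K := by
    intro u hu v hvu
    have hmem := degree_raising_mem hσ hW hu (hm v) hN
    rw [hvu, map_zero, smul_zero, sub_zero] at hmem
    exact (W.smul_mem_iff (mul_ne_zero hη (cast_choose_ne_zero _ _))).1 hmem
  have hαβ : ((-1 : F) ^ N * ((m + 1 + N).choose N : F)) ^ 2 ≠ (-1) ^ 2 := by
    rw [mul_pow, pow_right_comm]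
    simpa using sq_cast_choose_ne_one (R := F) hN m
  have hK_top : K = ⊤ := eq_top_of_twisted_mul_mem hσ hg hgg hσe he hge hK two_ne_zero
    (neg_one_pow_mul_self (N + 1)) he0 he1 (mul_ne_zero hη (cast_choose_ne_zero _ _))
    (neg_ne_zero.2 one_ne_zero) hαβ hseed
  exact (hK_top ▸ trivial : v ∈ K)

include hσ hW hN hg hgg in
lemma twistedGenerator_mem_of_forall_zero_mem (hzero : ∀ m v, twistedGenerator σ N m 0 v ∈ W)
    (m n : ℕ) (v : Matrix (Fin k) (Fin k) F) : twistedGenerator σ N m n v ∈ W := by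
  induction n generalizing m v with
  | zero => exact hzero m v
  | succ n ih =>
    have hmem := degree_raising_mem hσ hW hg (ih m (v * g)) hN
    rw [mul_assoc, hgg, mul_one] at hmem
    exact (W.smul_mem_iff (cast_choose_ne_zero n N)).1
      ((W.sub_mem_iff_right (W.smul_mem _ (ih (m + 1) _))).1 hmem)

end Generation

theorem RkklDagger_generated_by_minimal_weight_general [CharZero F] (hσ : IsAlgInvolution σ)
    (hN : 0 < N) {g e : Matrix (Fin k) (Fin k) F}
    (hg : g ∈ Module.End.eigenspace σ ((-1) ^ (N + 1))) (hgg : g * g = 1) (hσe : σ e = e)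
    (he : IsIdempotentElem e) (hge : Commute g e) (he0 : e ≠ 0) (he1 : e ≠ 1) :
    Submodule.span F {x | IterProd (mProd F k) (minimalWeightVectors σ N) x} =
      twistedSubspace σ N := by
  refine le_antisymm (span_iterProd_le_twistedSubspace hσ two_ne_zero) (Submodule.span_le.2 ?_)
  set W := Submodule.span F {x | IterProd (mProd F k) (minimalWeightVectors σ N) x}
  have hW : ∀ u ∈ Module.End.eigenspace σ ((-1) ^ (N + 1)), ∀ s, ∀ w ∈ W,
      mProd F k s (.single (0, N) u) w ∈ W := fun u hu s w hw ↦
    mProd_mem_span_iterProd ((mem_minimalWeightVectors hσ two_ne_zero).2 ⟨u, hu, rfl⟩) s hw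
  have hzero (m : ℕ) : ∀ v, twistedGenerator σ N m 0 v ∈ W := by
    induction m with
    | zero =>
      exact fun v ↦ Submodule.subset_span
        (IterProd.base _ (twistedGenerator_zero_zero_mem_minimalWeightVectors v))
    | succ m ih => exact twistedGenerator_succ_zero_mem hσ hW hN hg hgg hσe he hge he0 he1 ih
  rintro _ ⟨v, m, n, rfl⟩
  exact twistedGenerator_mem_of_forall_zero_mem hσ hW hN hg hgg hzero m n v

end Conformal

/-- **Theorem 4.2** (for `R†_{k×k,ℓ}`, `k = 2k₁ ≥ 4` even): for `ℓ ≥ 2`, the conformal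
algebra `R†_{k×k,ℓ}` is generated by its subspace of minimal weight `ℓ`, namely by
`X^{(ℓ)} = R†_{k×k,ℓ} ∩ R_{k×k}^{(ℓ)}`. -/
theorem RkklDagger_generated_by_minimal_weight (F : Type*) [Field F] [CharZero F]
    (k₁ ℓ : ℕ) (hk₁ : 2 ≤ k₁) (hℓ : 2 ≤ ℓ) :
    Submodule.span F {x : MatCarrier F (k₁ + k₁) |
      IterProd (mProd F (k₁ + k₁))
        {y : MatCarrier F (k₁ + k₁) |
          y ∈ RkklDagger F k₁ ℓ ∧ y ∈ mWeight F (k₁ + k₁) ℓ} x}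
      = RkklDagger F k₁ ℓ := by
  obtain ⟨N, rfl⟩ : ∃ N, ℓ = N + 1 := ⟨ℓ - 1, by omega⟩
  obtain ⟨g, e, hg, hgg, hσe, he, hge, he0, he1⟩ :=
    exists_dagger_eigenvector_and_idempotent (F := F) hk₁ (neg_one_pow_mul_self (N + 1))
  rw [RkklDagger_eq_twistedSubspace]
  exact RkklDagger_generated_by_minimal_weight_general isAlgInvolution_daggerLinearMap (by omega)
    hg hgg hσe he hge he0 he1
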